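/- arXiv:2502.05116 — 2 statements merged into one kernel-verified Lean document; each statement's English description precedes it below -/
import Mathlib

section
/- Let S and A be nonempty finite types, P : S → A → S → ℝ a transition kernel (P s a s' ≥ 0 for all s', and ∑_{s'} P s a s' = 1 for every pair (s,a)), r : S → A → ℝ, γ a real number with 0 ≤ γ < 1, and ε : S → A → ℝ. Define the VDN Bellman operator H by (H Q) s a = ∑_{s'} P s a s' * (r s a + γ * max_{a'} (Q s' a' + ε s' a')) − ε s a, and let Q* be its unique fixed point. Then for every initial function Q₀ : S → A → ℝ and every natural number n, the n-th iterate H^[n] Q₀ satisfies max_{(s,a)} |(H^[n] Q₀) s a − Q* s a| ≤ γ^n * max_{(s,a)} |Q₀ s a − Q* s a|; in particular, the iterates H^[n] Q₀ converge to Q* in the sup norm as n → ∞. -/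
/-!
In the sup metric on `S → A → ℝ`, maximising over actions is 1-Lipschitz, and averaging against
weights `w` is `∑ i, |w i|`-Lipschitz. The terms `r` and `ε` cancel in differences, so one Bellman
update contracts distances by the factor `|γ| * ∑ s', |P s a s'|`, which is `γ` for a transition
kernel; Banach's fixed point theorem does the rest.
-/

open Filter Finset
open scoped NNReal Topology

theorem sup'_dist_eq_dist {ι κ X : Type*} [Fintype ι] [Fintype κ] [Nonempty ι] [Nonempty κ]
    [PseudoMetricSpace X] (f g : ι → κ → X) :
    univ.sup' univ_nonempty (fun p : ι × κ => dist (f p.1 p.2) (g p.1 p.2)) = dist f g := by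
  apply le_antisymm
  · exact sup'_le _ _ fun p _ =>
      (dist_le_pi_dist (f p.1) (g p.1) p.2).trans (dist_le_pi_dist f g p.1)
  · simp only [dist_pi_le_iff']
    exact fun i k => le_sup' (fun p : ι × κ => dist (f p.1 p.2) (g p.1 p.2)) (mem_univ (i, k))

theorem lipschitzWith_sup' {ι : Type*} [Fintype ι] {s : Finset ι} (hs : s.Nonempty) :
    LipschitzWith 1 (fun f : ι → ℝ => s.sup' hs f) := by
  induction hs using Finset.Nonempty.cons_induction with
  | singleton i => simpa only [sup'_singleton] using LipschitzWith.eval (α := fun _ => ℝ) i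
  | cons i s hi hs ih =>
    simpa only [sup'_cons hs, max_self] using (LipschitzWith.eval (α := fun _ => ℝ) i).max ih

theorem lipschitzWith_sum_mul {ι R : Type*} [Fintype ι] [NonUnitalSeminormedRing R] (w : ι → R) :
    LipschitzWith (∑ i, ‖w i‖₊) (fun f : ι → R => ∑ i, w i * f i) := by
  refine LipschitzWith.of_dist_le_mul fun f g => ?_
  calc dist (∑ i, w i * f i) (∑ i, w i * g i)
      ≤ ∑ i, dist (w i * f i) (w i * g i) := dist_sum_sum_le _ _ _
    _ ≤ ∑ i, ‖w i‖ * dist f g := by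
      gcongr with i
      rw [dist_eq_norm, ← mul_sub]
      grw [norm_mul_le, ← dist_eq_norm, dist_le_pi_dist f g i]
    _ = ↑(∑ i, ‖w i‖₊) * dist f g := by simp only [← sum_mul, NNReal.coe_sum, coe_nnnorm]

section Bellman

variable {S A : Type*} [Fintype S] [Fintype A] [Nonempty A]

/-- The value `max_a (Q s a + ε s a)` of acting greedily with respect to the error-corrected
action values `Q + ε`. -/
def greedyValue (ε Q : S → A → ℝ) (s : S) : ℝ :=
  univ.sup' univ_nonempty fun a => Q s a + ε s a

/-- The VDN Bellman operator with reward `r`, discount factor `γ` and value-decomposition error `ε`.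
The transition kernel is encoded by arbitrary real weights `P s a s'`. -/
def vdnBellman (P : S → A → S → ℝ) (r : S → A → ℝ) (γ : ℝ) (ε Q : S → A → ℝ) : S → A → ℝ :=
  fun s a => (∑ s', P s a s' * (r s a + γ * greedyValue ε Q s')) - ε s a

theorem lipschitzWith_greedyValue (ε : S → A → ℝ) : LipschitzWith 1 (greedyValue ε) := by
  refine LipschitzWith.of_dist_le_mul fun Q R => ?_
  rw [NNReal.coe_one, one_mul, dist_pi_le_iff dist_nonneg]
  intro s
  calc dist (greedyValue ε Q s) (greedyValue ε R s)
      ≤ dist (Q s + ε s) (R s + ε s) := by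
        simpa only [NNReal.coe_one, one_mul] using!
          (lipschitzWith_sup' univ_nonempty).dist_le_mul (Q s + ε s) (R s + ε s)
    _ = dist (Q s) (R s) := dist_add_right _ _ _
    _ ≤ dist Q R := dist_le_pi_dist Q R s

theorem vdnBellman_sub_vdnBellman (P : S → A → S → ℝ) (r : S → A → ℝ) (γ : ℝ)
    (ε Q R : S → A → ℝ) (s : S) (a : A) :
    vdnBellman P r γ ε Q s a - vdnBellman P r γ ε R s a =
      γ * (∑ s', P s a s' * greedyValue ε Q s' - ∑ s', P s a s' * greedyValue ε R s') := by
  simp only [vdnBellman, mul_add, sum_add_distrib, mul_left_comm _ γ, ← mul_sum]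
  ring

theorem lipschitzWith_vdnBellman {P : S → A → S → ℝ} {γ : ℝ} {K : ℝ≥0}
    (hPK : ∀ s a, |γ| * ∑ s', |P s a s'| ≤ K) (r ε : S → A → ℝ) :
    LipschitzWith K (vdnBellman P r γ ε) := by
  refine LipschitzWith.of_dist_le_mul fun Q R => ?_
  simp only [dist_pi_le_iff (mul_nonneg K.coe_nonneg dist_nonneg)]
  intro s a
  have expectation_le : dist (∑ s', P s a s' * greedyValue ε Q s')
      (∑ s', P s a s' * greedyValue ε R s') ≤ (∑ s', |P s a s'|) * dist Q R := by
    simpa only [Function.comp_apply, mul_one, NNReal.coe_sum, coe_nnnorm, Real.norm_eq_abs] using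
      ((lipschitzWith_sum_mul (P s a)).comp (lipschitzWith_greedyValue ε)).dist_le_mul Q R
  calc dist (vdnBellman P r γ ε Q s a) (vdnBellman P r γ ε R s a)
      = |γ| * dist (∑ s', P s a s' * greedyValue ε Q s')
          (∑ s', P s a s' * greedyValue ε R s') := by
        rw [Real.dist_eq, vdnBellman_sub_vdnBellman, abs_mul, Real.dist_eq]
    _ ≤ |γ| * ((∑ s', |P s a s'|) * dist Q R) := by gcongr
    _ = (|γ| * ∑ s', |P s a s'|) * dist Q R := (mul_assoc _ _ _).symm
    _ ≤ K * dist Q R := by gcongr; exact hPK s a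

theorem vdn_bellman_iterates_converge_general [Nonempty S] {P : S → A → S → ℝ} {γ : ℝ} {K : ℝ≥0}
    (hK : K < 1) (hPK : ∀ s a, |γ| * ∑ s', |P s a s'| ≤ K) (r ε : S → A → ℝ)
    {Qstar : S → A → ℝ} (hQstar : vdnBellman P r γ ε Qstar = Qstar) :
    (∀ Q₀ : S → A → ℝ, ∀ n : ℕ,
      univ.sup' univ_nonempty
        (fun p : S × A => |((vdnBellman P r γ ε)^[n] Q₀) p.1 p.2 - Qstar p.1 p.2|)
      ≤ K ^ n * univ.sup' univ_nonempty (fun p : S × A => |Q₀ p.1 p.2 - Qstar p.1 p.2|)) ∧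
    (∀ Q₀ : S → A → ℝ,
      Tendsto
        (fun n : ℕ => univ.sup' univ_nonempty
          (fun p : S × A => |((vdnBellman P r γ ε)^[n] Q₀) p.1 p.2 - Qstar p.1 p.2|))
        atTop (𝓝 0)) := by
  have hLip : LipschitzWith K (vdnBellman P r γ ε) := lipschitzWith_vdnBellman hPK r ε
  have hContr : ContractingWith K (vdnBellman P r γ ε) := ⟨hK, hLip⟩
  have hFix : Function.IsFixedPt (vdnBellman P r γ ε) Qstar := hQstar
  simp only [← Real.dist_eq, sup'_dist_eq_dist, ← tendsto_iff_dist_tendsto_zero]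
  refine ⟨fun Q₀ n => ?_, fun Q₀ => ?_⟩
  · simpa only [(hFix.iterate n).eq, NNReal.coe_pow] using (hLip.iterate n).dist_le_mul Q₀ Qstar
  · exact hContr.fixedPoint_unique hFix ▸ hContr.tendsto_iterate_fixedPoint Q₀

end Bellman

/-- Iterates of the VDN Bellman operator converge geometrically
to its unique fixed point in the sup norm. -/
theorem vdn_bellman_iterates_converge
    {S A : Type*} [Fintype S] [Fintype A] [Nonempty S] [Nonempty A]
    (P : S → A → S → ℝ) (r : S → A → ℝ) (γ : ℝ) (ε : S → A → ℝ)
    (hP0 : ∀ s a s', 0 ≤ P s a s')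
    (hP1 : ∀ s a, ∑ s', P s a s' = 1)
    (hγ0 : 0 ≤ γ) (hγ1 : γ < 1)
    (H : (S → A → ℝ) → (S → A → ℝ))
    (hH : ∀ Q s a, H Q s a =
      (∑ s', P s a s' *
        (r s a + γ * Finset.univ.sup' Finset.univ_nonempty
          (fun a' => Q s' a' + ε s' a'))) - ε s a)
    (Qstar : S → A → ℝ) (hQstar : H Qstar = Qstar) :
    (∀ Q₀ : S → A → ℝ, ∀ n : ℕ,
      Finset.univ.sup' Finset.univ_nonempty
        (fun p : S × A => |(H^[n] Q₀) p.1 p.2 - Qstar p.1 p.2|)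
      ≤ γ ^ n * Finset.univ.sup' Finset.univ_nonempty
        (fun p : S × A => |Q₀ p.1 p.2 - Qstar p.1 p.2|)) ∧
    (∀ Q₀ : S → A → ℝ,
      Filter.Tendsto
        (fun n : ℕ => Finset.univ.sup' Finset.univ_nonempty
          (fun p : S × A => |(H^[n] Q₀) p.1 p.2 - Qstar p.1 p.2|))
        Filter.atTop (nhds 0)) := by
  obtain rfl : H = vdnBellman P r γ ε := funext fun Q => funext₂ (hH Q)
  exact vdn_bellman_iterates_converge_general (K := .mk γ hγ0) hγ1
    (fun s a => by simp [abs_of_nonneg, hP0, hP1, hγ0]) r ε hQstar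
end

section
/- Let S and A be nonempty finite types, P : S → A → S → ℝ a transition kernel (P s a s' ≥ 0 for all s', and ∑_{s'} P s a s' = 1 for every pair (s,a)), r : S → A → ℝ, γ a real number with 0 ≤ γ < 1, and ε : S → A → ℝ. Let Q*_ε be the unique fixed point of the VDN Bellman operator (H Q) s a = ∑_{s'} P s a s' * (r s a + γ * max_{a'} (Q s' a' + ε s' a')) − ε s a, and let Q* be the unique fixed point of the standard Bellman optimality operator (T Q) s a = ∑_{s'} P s a s' * (r s a + γ * max_{a'} Q s' a'). Then max_{(s,a)} |Q*_ε s a − Q* s a| = max_{(s,a)} |ε s a|. In particular, if ε = 0 then Q*_ε = Q*, so when the value-decomposition error vanishes the VDN method converges to the actual optimal global Q-function. -/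
/-!
Absorbing the error into the unknown turns the VDN operator into the Bellman operator:
`H Q + ε = T (Q + ε)`. Hence `Qε + ε` is a fixed point of `T`. Since `T` strictly decreases sup
distances (a maximum is 1-Lipschitz and discounted averaging shrinks), its fixed point is unique,
so `Qε + ε = Q*` and the two limits differ by exactly `ε`.
-/

open Finset Function

theorem abs_sup'_sub_sup'_le {ι M : Type*} [AddCommGroup M] [LinearOrder M] [IsOrderedAddMonoid M]
    {s : Finset ι} (hs : s.Nonempty) {f g : ι → M} {C : M} (h : ∀ i ∈ s, |f i - g i| ≤ C) :
    |s.sup' hs f - s.sup' hs g| ≤ C := by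
  have sup'_le_add {u v : ι → M} (huv : ∀ i ∈ s, u i - v i ≤ C) :
      s.sup' hs u ≤ C + s.sup' hs v :=
    sup'_le hs u fun i hi ↦ (sub_le_iff_le_add.1 (huv i hi)).trans <|
      add_le_add_right (le_sup' v hi) C
  refine abs_sub_le_iff.2 ⟨sub_le_iff_le_add.2 (sup'_le_add fun i hi ↦ ?_),
    sub_le_iff_le_add.2 (sup'_le_add fun i hi ↦ ?_)⟩
  exacts [(abs_sub_le_iff.1 (h i hi)).1, (abs_sub_le_iff.1 (h i hi)).2]

section Bellman

variable {S A : Type*} [Fintype S] [Fintype A] [Nonempty A]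

/-- The Bellman optimality operator of a decision process with transition weights `P`, reward `r`
and discount factor `γ`. The rows `P s a` are arbitrary real weights, not bundled as probability
vectors. -/
def bellmanOperator (P : S → A → S → ℝ) (r : S → A → ℝ) (γ : ℝ) (Q : S → A → ℝ) : S → A → ℝ :=
  fun s a ↦ ∑ s', P s a s' * (r s a + γ * univ.sup' univ_nonempty (Q s'))

/-- The Bellman operator of value-decomposition networks with decomposition error `ε`: the target
is computed from `Q + ε`, and the error is subtracted from the outcome. -/
def vdnOperator (P : S → A → S → ℝ) (r : S → A → ℝ) (γ : ℝ) (ε Q : S → A → ℝ) : S → A → ℝ :=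
  bellmanOperator P r γ (Q + ε) - ε

variable {P : S → A → S → ℝ} {r : S → A → ℝ} {γ : ℝ} {ε Q R Qε : S → A → ℝ}

theorem abs_bellmanOperator_sub_le (s : S) (a : A) :
    |bellmanOperator P r γ Q s a - bellmanOperator P r γ R s a| ≤
      |γ| * (∑ s', |P s a s'|) * dist Q R := by
  have abs_max_sub_le (s' : S) :
      |univ.sup' univ_nonempty (Q s') - univ.sup' univ_nonempty (R s')| ≤ dist Q R :=
    abs_sup'_sub_sup'_le _ fun a' _ ↦
      (dist_le_pi_dist (Q s') (R s') a').trans (dist_le_pi_dist Q R s')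
  calc
    _ = |∑ s', γ * P s a s' *
          (univ.sup' univ_nonempty (Q s') - univ.sup' univ_nonempty (R s'))| := by
      rw [bellmanOperator, bellmanOperator, ← sum_sub_distrib]
      congr! 2
      ring
    _ ≤ ∑ s', |γ| * |P s a s'| * dist Q R := by
      refine (abs_sum_le_sum_abs _ _).trans (sum_le_sum fun s' _ ↦ ?_)
      rw [abs_mul, abs_mul]
      gcongr
      exact abs_max_sub_le s'
    _ = |γ| * (∑ s', |P s a s'|) * dist Q R := by rw [← sum_mul, ← mul_sum]

theorem dist_bellmanOperator_lt (hP : ∀ s a, |γ| * ∑ s', |P s a s'| < 1) (hQR : Q ≠ R) :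
    dist (bellmanOperator P r γ Q) (bellmanOperator P r γ R) < dist Q R := by
  have hdist : 0 < dist Q R := dist_pos.2 hQR
  refine (dist_pi_lt_iff hdist).2 fun s ↦ (dist_pi_lt_iff hdist).2 fun a ↦ ?_
  exact (abs_bellmanOperator_sub_le s a).trans_lt (mul_lt_of_lt_one_left hdist (hP s a))

theorem bellmanOperator_fixedPoint_unique (hP : ∀ s a, |γ| * ∑ s', |P s a s'| < 1)
    (hQ : IsFixedPt (bellmanOperator P r γ) Q) (hR : IsFixedPt (bellmanOperator P r γ) R) :
    Q = R := by
  by_contra hQR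
  simpa only [hQ.eq, hR.eq, lt_self_iff_false] using dist_bellmanOperator_lt (r := r) hP hQR

theorem semiconj_add_vdnOperator_bellmanOperator :
    Semiconj (· + ε) (vdnOperator P r γ ε) (bellmanOperator P r γ) :=
  fun _ ↦ sub_add_cancel _ ε

theorem vdn_fixedPoint_add_error_eq (hP : ∀ s a, |γ| * ∑ s', |P s a s'| < 1)
    (hQε : IsFixedPt (vdnOperator P r γ ε) Qε) (hQ : IsFixedPt (bellmanOperator P r γ) Q) :
    Qε + ε = Q :=
  bellmanOperator_fixedPoint_unique hP (hQε.map semiconj_add_vdnOperator_bellmanOperator) hQ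

theorem vdn_fixed_point_error_general [Nonempty S]
    (hP : ∀ s a, |γ| * ∑ s', |P s a s'| < 1)
    (hQε : IsFixedPt (vdnOperator P r γ ε) Qε) (hQ : IsFixedPt (bellmanOperator P r γ) Q) :
    univ.sup' univ_nonempty (fun p : S × A ↦ |Qε p.1 p.2 - Q p.1 p.2|) =
        univ.sup' univ_nonempty (fun p : S × A ↦ |ε p.1 p.2|) ∧
      (ε = 0 → Qε = Q) := by
  obtain rfl := vdn_fixedPoint_add_error_eq hP hQε hQ
  simp +contextual

end Bellman

/-- The distance (in the sup norm) between the fixed point of the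
VDN Bellman operator and the fixed point of the standard Bellman optimality
operator equals the sup norm of the decomposition error ε; in particular,
when ε = 0 the two fixed points coincide. -/
theorem vdn_fixed_point_error
    {S A : Type*} [Fintype S] [Fintype A] [Nonempty S] [Nonempty A]
    (P : S → A → S → ℝ) (r : S → A → ℝ) (γ : ℝ) (ε : S → A → ℝ)
    (hP0 : ∀ s a s', 0 ≤ P s a s')
    (hP1 : ∀ s a, ∑ s', P s a s' = 1)
    (hγ0 : 0 ≤ γ) (hγ1 : γ < 1)
    (H : (S → A → ℝ) → (S → A → ℝ))
    (hH : ∀ Q s a, H Q s a =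
      (∑ s', P s a s' *
        (r s a + γ * Finset.univ.sup' Finset.univ_nonempty
          (fun a' => Q s' a' + ε s' a'))) - ε s a)
    (T : (S → A → ℝ) → (S → A → ℝ))
    (hT : ∀ Q s a, T Q s a =
      ∑ s', P s a s' *
        (r s a + γ * Finset.univ.sup' Finset.univ_nonempty
          (fun a' => Q s' a')))
    (Qε : S → A → ℝ) (hQε : H Qε = Qε)
    (Qstar : S → A → ℝ) (hQstar : T Qstar = Qstar) :
    Finset.univ.sup' Finset.univ_nonempty
      (fun p : S × A => |Qε p.1 p.2 - Qstar p.1 p.2|)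
    = Finset.univ.sup' Finset.univ_nonempty
      (fun p : S × A => |ε p.1 p.2|) ∧
    ((ε = fun _ _ => 0) → Qε = Qstar) := by
  obtain rfl : H = vdnOperator P r γ ε := funext fun Q ↦ funext₂ (hH Q)
  obtain rfl : T = bellmanOperator P r γ := funext fun Q ↦ funext₂ (hT Q)
  refine vdn_fixed_point_error_general (fun s a ↦ ?_) hQε hQstar
  simpa only [abs_of_nonneg hγ0, abs_of_nonneg (hP0 s a _), hP1, mul_one] using hγ1
end
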